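/- Let d_A, d_B ≥ 1 and let S be a self-adjoint operator on ℂ^{d_A} ⊗ ℂ^{d_B}. Then S is separable positive (a finite sum Σᵢ Aᵢ ⊗ Bᵢ of Kronecker products of positive semidefinite matrices) if and only if Re tr(S X) ≥ 0 for every self-adjoint X on ℂ^{d_A} ⊗ ℂ^{d_B} that is positive on pure tensors, i.e., satisfies ⟨ψ ⊗ φ, X(ψ ⊗ φ)⟩ ≥ 0 for all ψ ∈ ℂ^{d_A} and φ ∈ ℂ^{d_B}. Dually, a self-adjoint X is positive on pure tensors if and only if Re tr(X S) ≥ 0 for every separable positive S. -/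

import Mathlib

open Matrix Kronecker ComplexOrder

/-- Separable positivity: a finite sum of Kronecker products of
positive semidefinite matrices. -/
def SepPos {dA dB : ℕ} (S : Matrix (Fin dA × Fin dB) (Fin dA × Fin dB) ℂ) : Prop :=
  ∃ (n : ℕ) (A : Fin n → Matrix (Fin dA) (Fin dA) ℂ)
    (B : Fin n → Matrix (Fin dB) (Fin dB) ℂ),
    (∀ i, (A i).PosSemidef) ∧ (∀ i, (B i).PosSemidef) ∧ S = ∑ i, (A i) ⊗ₖ (B i)

/-- Positivity on pure tensors: `⟨ψ ⊗ φ, X (ψ ⊗ φ)⟩ ≥ 0` for all `ψ`, `φ`. -/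
def POPT {dA dB : ℕ} (X : Matrix (Fin dA × Fin dB) (Fin dA × Fin dB) ℂ) : Prop :=
  ∀ (ψ : Fin dA → ℂ) (φ : Fin dB → ℂ),
    0 ≤ star (fun p : Fin dA × Fin dB => ψ p.1 * φ p.2) ⬝ᵥ
      (X *ᵥ fun p : Fin dA × Fin dB => ψ p.1 * φ p.2)

/-!
The separable positive operators form the convex cone generated by the projectors onto pure
tensors, and the operators positive on pure tensors are, by definition, the dual of this set of
generators; a set and the cone it generates have the same dual. The other half is the bipolar
theorem, which needs the cone to be closed: it is generated by the projectors onto normalized pure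
tensors, a compact set on which the trace is positive. Since all generators are Hermitian, testing
against the Hermitian part of an operator is the same as testing against the operator itself.
-/

open PointedCone ComplexStarModule
open scoped Pointwise

section ConvexCones

theorem convexHull_eq_biUnion_image_stdSimplex {E : Type*} [AddCommGroup E] [Module ℝ E]
    [FiniteDimensional ℝ E] (s : Set E) :
    convexHull ℝ s = ⋃ m ∈ Set.Iic (Module.finrank ℝ E + 1),
      (fun p : (Fin m → ℝ) × (Fin m → E) => ∑ i, p.1 i • p.2 i) ''
        (stdSimplex ℝ (Fin m) ×ˢ Set.univ.pi fun _ => s) := by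
  apply Set.Subset.antisymm
  · intro x hx
    obtain ⟨ι, _, z, w, hz, hindep, hw, hw_sum, rfl⟩ := eq_pos_convex_span_of_mem_convexHull hx
    have hcard : Fintype.card ι ≤ Module.finrank ℝ E + 1 :=
      hindep.card_le_finrank_succ.trans (Nat.succ_le_succ (Submodule.finrank_le _))
    let e := (Fintype.equivFin ι).symm
    exact Set.mem_biUnion hcard ⟨(w ∘ e, z ∘ e),
      ⟨⟨fun i => (hw _).le, (e.sum_comp w).trans hw_sum⟩, fun i _ => hz ⟨_, rfl⟩⟩,
      e.sum_comp fun i => w i • z i⟩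
  · simp only [Set.iUnion_subset_iff, Set.image_subset_iff]
    rintro m - ⟨w, z⟩ ⟨⟨hw, hw_sum⟩, hz⟩
    exact (convex_convexHull ℝ s).sum_mem (fun i _ => hw i) hw_sum
      fun i _ => subset_convexHull ℝ s (hz i trivial)

theorem mem_hull_iff_of_convex {𝕜 E : Type*} [Field 𝕜] [LinearOrder 𝕜] [IsStrictOrderedRing 𝕜]
    [AddCommGroup E] [Module 𝕜 E] {s : Set E} (hs : Convex 𝕜 s) (hne : s.Nonempty) {x : E} :
    x ∈ hull 𝕜 s ↔ ∃ r : 𝕜, 0 ≤ r ∧ x ∈ r • s := by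
  constructor
  · intro hx
    induction hx using Submodule.span_induction with
    | mem x hx => exact ⟨1, zero_le_one, by rwa [one_smul]⟩
    | zero => exact ⟨0, le_rfl, by rw [Set.zero_smul_set hne]; rfl⟩
    | add x y _ _ hx hy =>
      obtain ⟨a, ha, hx⟩ := hx
      obtain ⟨b, hb, hy⟩ := hy
      exact ⟨a + b, add_nonneg ha hb, hs.add_smul ha hb ▸ Set.add_mem_add hx hy⟩
    | smul c x _ hx =>
      obtain ⟨a, ha, hx⟩ := hx
      exact ⟨c * a, mul_nonneg c.2 ha, mul_smul (c : 𝕜) a s ▸ Set.smul_mem_smul_set hx⟩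
  · rintro ⟨r, hr, y, hy, rfl⟩
    exact PointedCone.smul_mem _ hr (subset_hull hy)

theorem hull_convexHull {𝕜 E : Type*} [Field 𝕜] [LinearOrder 𝕜] [IsStrictOrderedRing 𝕜]
    [AddCommGroup E] [Module 𝕜 E] (s : Set E) : hull 𝕜 (convexHull 𝕜 s) = hull 𝕜 s :=
  le_antisymm (Submodule.span_le.2 (convexHull_min subset_hull (PointedCone.convex _)))
    (Submodule.span_mono (subset_convexHull 𝕜 s))

variable {E F : Type*} [AddCommGroup E] [Module ℝ E] [TopologicalSpace E] [ContinuousSMul ℝ E]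

theorem isClosed_hull_of_convex_of_isCompact [T2Space E] {s : Set E} (hconv : Convex ℝ s)
    (hs : IsCompact s) (f : E →L[ℝ] ℝ) (hf : ∀ x ∈ s, 0 < f x) :
    IsClosed (hull ℝ s : Set E) := by
  rcases s.eq_empty_or_nonempty with rfl | hne
  · simp
  let raySet : Set (E × s) := {p | 0 ≤ f p.1 ∧ f p.1 • (p.2 : E) = f p.2 • p.1}
  have hclosed : IsClosed raySet :=
    .and (isClosed_le (by fun_prop) (by fun_prop)) (isClosed_eq (by fun_prop) (by fun_prop))
  have : CompactSpace s := isCompact_iff_compactSpace.1 hs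
  -- If `x = r • y` with `y ∈ s`, then `r = f x / f y`: the cone is the projection of `raySet`
  -- along the compact factor `s`.
  suffices h : (hull ℝ s : Set E) = Prod.fst '' raySet from
    h ▸ isClosedMap_fst_of_compactSpace _ hclosed
  ext x
  rw [SetLike.mem_coe, mem_hull_iff_of_convex hconv hne]
  constructor
  · rintro ⟨r, hr, y, hy, rfl⟩
    refine ⟨(r • y, ⟨y, hy⟩), ⟨?_, ?_⟩, rfl⟩
    · simpa using mul_nonneg hr (hf y hy).le
    · simp [smul_smul, mul_comm]
  · rintro ⟨⟨x, y, hy⟩, ⟨hfx, hxy⟩, rfl⟩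
    refine ⟨f x / f y, div_nonneg hfx (hf y hy).le, y, hy, ?_⟩
    simp only [div_eq_inv_mul, mul_smul, hxy, inv_smul_smul₀ (hf y hy).ne']

variable [IsTopologicalAddGroup E]

theorem isCompact_convexHull [FiniteDimensional ℝ E] {s : Set E} (hs : IsCompact s) :
    IsCompact (convexHull ℝ s) := by
  rw [convexHull_eq_biUnion_image_stdSimplex]
  refine (Set.finite_Iic _).isCompact_biUnion fun m _ => ?_
  exact ((isCompact_stdSimplex ℝ (Fin m)).prod (isCompact_univ_pi fun _ => hs)).image (by fun_prop)

theorem isClosed_hull_of_isCompact [FiniteDimensional ℝ E] [T2Space E] {s : Set E}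
    (hs : IsCompact s) (f : E →L[ℝ] ℝ) (hf : ∀ x ∈ s, 0 < f x) :
    IsClosed (hull ℝ s : Set E) := by
  rw [← hull_convexHull]
  exact isClosed_hull_of_convex_of_isCompact (convex_convexHull ℝ s) (isCompact_convexHull hs) f
    (convexHull_min hf ((convex_Ioi 0).linear_preimage f.toLinearMap))

theorem dual_flip_dual_eq_of_isClosed [LocallyConvexSpace ℝ E] [AddCommGroup F] [Module ℝ F]
    (p : E →ₗ[ℝ] F →ₗ[ℝ] ℝ) [p.IsPerfPair] {C : PointedCone ℝ E} (hC : IsClosed (C : Set E)) :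
    dual p.flip (dual p (C : Set E)) = C := by
  refine le_antisymm (fun x hx => ?_) subset_dual_dual
  by_contra hxC
  obtain ⟨f, hfC, hfx⟩ := ProperCone.hyperplane_separation_point (⟨C, hC⟩ : ProperCone ℝ E) hxC
  obtain ⟨y, hy⟩ := p.flip.toPerfPair.surjective f.toLinearMap
  have hpy : ∀ z, p z y = f z := fun z => LinearMap.congr_fun hy z
  exact hfx.not_ge (hpy x ▸ hx fun z hz => (hpy z).symm ▸ hfC z hz)

end ConvexCones

section TracePairing

variable {n : Type*} [Fintype n]

/-- The real bilinear pairing `(A, B) ↦ Re tr(A B)` of complex matrices. It is the Hilbert–Schmidt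
pairing when `A` is Hermitian; leaving out the adjoint makes it symmetric. -/
noncomputable def reTracePairing (n : Type*) [Fintype n] :
    Matrix n n ℂ →ₗ[ℝ] Matrix n n ℂ →ₗ[ℝ] ℝ :=
  (LinearMap.mul ℝ (Matrix n n ℂ)).compr₂ (Complex.reLm ∘ₗ traceLinearMap n ℝ ℂ)

@[simp]
theorem reTracePairing_apply (A B : Matrix n n ℂ) : reTracePairing n A B = (A * B).trace.re :=
  rfl

theorem flip_reTracePairing : (reTracePairing n).flip = reTracePairing n := by
  ext A B
  simp [trace_mul_comm A B]

theorem reTracePairing_injective : Function.Injective (reTracePairing n) := by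
  refine (injective_iff_map_eq_zero _).2 fun A hA => ?_
  have htrace : (A * Aᴴ).trace.re = 0 := by simpa using LinearMap.congr_fun hA Aᴴ
  have hnonneg := Complex.le_def.1 (posSemidef_self_mul_conjTranspose A).trace_nonneg
  exact trace_mul_conjTranspose_self_eq_zero_iff.1 (Complex.ext htrace hnonneg.2.symm)

instance reTracePairing_isPerfPair : (reTracePairing n).IsPerfPair :=
  .of_injective reTracePairing_injective (flip_reTracePairing (n := n) ▸ reTracePairing_injective)

theorem re_trace_mul_realPart {A : Matrix n n ℂ} (hA : A.IsHermitian) (X : Matrix n n ℂ) :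
    (A * (ℜ X : Matrix n n ℂ)).trace.re = (A * X).trace.re := by
  have hstar : (A * Xᴴ).trace.re = (A * X).trace.re := by
    rw [trace_mul_comm, ← hA.eq, ← conjTranspose_mul, trace_conjTranspose, hA.eq]
    exact Complex.conj_re _
  rw [realPart_apply_coe, star_eq_conjTranspose, Matrix.mul_smul, trace_smul, Matrix.mul_add,
    trace_add, Complex.smul_re, Complex.add_re, hstar, smul_eq_mul]
  ring

end TracePairing

section PureProducts

variable {m n : Type*}

/-- The rank-one operator `|ψ ⊗ φ⟩⟨ψ ⊗ φ|` attached to a pure tensor, a multiple of the projector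
onto `ψ ⊗ φ` since the vectors are not required to be normalized. -/
def pureProduct (ψ : m → ℂ) (φ : n → ℂ) : Matrix (m × n) (m × n) ℂ :=
  vecMulVec ψ (star ψ) ⊗ₖ vecMulVec φ (star φ)

theorem pureProduct_eq_vecMulVec (ψ : m → ℂ) (φ : n → ℂ) :
    pureProduct ψ φ =
      vecMulVec (fun p => ψ p.1 * φ p.2) (star fun p : m × n => ψ p.1 * φ p.2) := by
  ext ⟨i, j⟩ ⟨k, l⟩
  simp only [pureProduct, kroneckerMap_apply, vecMulVec_apply, Pi.star_apply, star_mul']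
  ring

theorem isHermitian_pureProduct (ψ : m → ℂ) (φ : n → ℂ) : (pureProduct ψ φ).IsHermitian := by
  rw [Matrix.IsHermitian, pureProduct_eq_vecMulVec, conjTranspose_vecMulVec, star_star]

theorem pureProduct_smul_smul (a b : ℝ) (ψ : m → ℂ) (φ : n → ℂ) :
    pureProduct (a • ψ) (b • φ) = (a ^ 2 * b ^ 2) • pureProduct ψ φ := by
  ext ⟨i, j⟩ ⟨k, l⟩
  simp only [pureProduct, star_smul, star_trivial, vecMulVec_smul, smul_vecMulVec,
    kroneckerMap_apply, Matrix.smul_apply, vecMulVec_apply, Complex.real_smul, Complex.ofReal_mul,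
    Complex.ofReal_pow]
  ring

theorem continuous_uncurry_pureProduct :
    Continuous fun p : (m → ℂ) × (n → ℂ) => pureProduct p.1 p.2 := by
  refine continuous_matrix fun i j => ?_
  simp only [pureProduct, kroneckerMap_apply, vecMulVec_apply, Pi.star_apply]
  fun_prop

/-- The convex cone generated by the operators `|ψ ⊗ φ⟩⟨ψ ⊗ φ|`; on `Fin dA × Fin dB` its elements
are the separable positive operators. -/
noncomputable def pureProductCone (m n : Type*) : PointedCone ℝ (Matrix (m × n) (m × n) ℂ) :=
  hull ℝ (Set.image2 pureProduct Set.univ Set.univ)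

theorem pureProduct_mem_pureProductCone (ψ : m → ℂ) (φ : n → ℂ) :
    pureProduct ψ φ ∈ pureProductCone m n :=
  subset_hull (Set.mem_image2_of_mem trivial trivial)

theorem kronecker_mem_pureProductCone [Finite m] [Finite n] {A : Matrix m m ℂ}
    {B : Matrix n n ℂ} (hA : A.PosSemidef) (hB : B.PosSemidef) : A ⊗ₖ B ∈ pureProductCone m n := by
  obtain ⟨r, v, rfl⟩ := posSemidef_iff_eq_sum_vecMulVec.1 hA
  obtain ⟨s, w, rfl⟩ := posSemidef_iff_eq_sum_vecMulVec.1 hB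
  have hsum : (∑ i, vecMulVec (v i) (star (v i))) ⊗ₖ (∑ j, vecMulVec (w j) (star (w j))) =
      ∑ i, ∑ j, pureProduct (v i) (w j) := by
    ext ⟨a, b⟩ ⟨c, d⟩
    simp only [pureProduct, Matrix.sum_apply, kroneckerMap_apply, Finset.sum_mul_sum]
  rw [hsum]
  exact sum_mem fun i _ => sum_mem fun j _ => pureProduct_mem_pureProductCone _ _

variable [Fintype m] [Fintype n]

theorem trace_mul_pureProduct (X : Matrix (m × n) (m × n) ℂ) (ψ : m → ℂ) (φ : n → ℂ) :
    (X * pureProduct ψ φ).trace =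
      star (fun p : m × n => ψ p.1 * φ p.2) ⬝ᵥ (X *ᵥ fun p => ψ p.1 * φ p.2) := by
  rw [pureProduct_eq_vecMulVec, mul_vecMulVec, trace_vecMulVec, dotProduct_comm]

theorem trace_pureProduct_pos {ψ : m → ℂ} {φ : n → ℂ} (hψ : ψ ≠ 0) (hφ : φ ≠ 0) :
    0 < (pureProduct ψ φ).trace := by
  rw [pureProduct, trace_kronecker, trace_vecMulVec, trace_vecMulVec]
  exact mul_pos (dotProduct_self_star_pos_iff.2 hψ) (dotProduct_self_star_pos_iff.2 hφ)

theorem pureProductCone_eq_hull_sphere :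
    pureProductCone m n =
      hull ℝ (Set.image2 pureProduct (Metric.sphere 0 1) (Metric.sphere 0 1)) := by
  refine le_antisymm (Submodule.span_le.2 ?_)
    (Submodule.span_mono (Set.image2_subset (Set.subset_univ _) (Set.subset_univ _)))
  rintro _ ⟨ψ, -, φ, -, rfl⟩
  rcases eq_or_ne ψ 0 with rfl | hψ
  · simp [pureProduct]
  rcases eq_or_ne φ 0 with rfl | hφ
  · simp [pureProduct]
  have hrescale : pureProduct ψ φ =
      (‖ψ‖ ^ 2 * ‖φ‖ ^ 2) • pureProduct (‖ψ‖⁻¹ • ψ) (‖φ‖⁻¹ • φ) := by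
    rw [← pureProduct_smul_smul, smul_inv_smul₀ (norm_ne_zero_iff.2 hψ),
      smul_inv_smul₀ (norm_ne_zero_iff.2 hφ)]
  rw [SetLike.mem_coe, hrescale]
  refine PointedCone.smul_mem _ (by positivity) (subset_hull (Set.mem_image2_of_mem ?_ ?_))
  · simpa using norm_smul_inv_norm (𝕜 := ℝ) hψ
  · simpa using norm_smul_inv_norm (𝕜 := ℝ) hφ

theorem isClosed_pureProductCone (m n : Type*) [Finite m] [Finite n] :
    IsClosed (pureProductCone m n : Set (Matrix (m × n) (m × n) ℂ)) := by
  cases nonempty_fintype m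
  cases nonempty_fintype n
  rw [pureProductCone_eq_hull_sphere]
  have hcompact : IsCompact (Set.image2 pureProduct (Metric.sphere (0 : m → ℂ) 1)
      (Metric.sphere (0 : n → ℂ) 1)) := by
    rw [← Set.image_prod]
    exact ((isCompact_sphere _ _).prod (isCompact_sphere _ _)).image continuous_uncurry_pureProduct
  let reTrace : Matrix (m × n) (m × n) ℂ →L[ℝ] ℝ :=
    LinearMap.toContinuousLinearMap (Complex.reLm ∘ₗ traceLinearMap (m × n) ℝ ℂ)
  refine isClosed_hull_of_isCompact hcompact reTrace ?_
  rintro _ ⟨ψ, hψ, φ, hφ, rfl⟩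
  exact (Complex.lt_def.1 (trace_pureProduct_pos (ne_zero_of_mem_unit_sphere ⟨ψ, hψ⟩)
    (ne_zero_of_mem_unit_sphere ⟨φ, hφ⟩))).1

theorem mem_dual_pureProductCone_iff {X : Matrix (m × n) (m × n) ℂ} :
    X ∈ dual (reTracePairing (m × n)) (pureProductCone m n) ↔
      ∀ ψ φ, 0 ≤ (X * pureProduct ψ φ).trace.re := by
  rw [pureProductCone, dual_hull, mem_dual, Set.forall_mem_image2]
  simp only [Set.mem_univ, true_imp_iff, reTracePairing_apply, trace_mul_comm X]

theorem realPart_mem_dual_pureProductCone {X : Matrix (m × n) (m × n) ℂ}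
    (hX : X ∈ dual (reTracePairing (m × n)) (pureProductCone m n)) :
    (ℜ X : Matrix (m × n) (m × n) ℂ) ∈ dual (reTracePairing (m × n)) (pureProductCone m n) := by
  rw [mem_dual_pureProductCone_iff] at hX ⊢
  intro ψ φ
  rw [trace_mul_comm, re_trace_mul_realPart (isHermitian_pureProduct ψ φ), trace_mul_comm]
  exact hX ψ φ

theorem mem_pureProductCone_iff_of_isHermitian {S : Matrix (m × n) (m × n) ℂ}
    (hS : S.IsHermitian) :
    S ∈ pureProductCone m n ↔ ∀ X : Matrix (m × n) (m × n) ℂ, X.IsHermitian →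
      X ∈ dual (reTracePairing (m × n)) (pureProductCone m n) → 0 ≤ (S * X).trace.re := by
  refine ⟨fun hmem X _ hX => hX hmem, fun h => ?_⟩
  have : LocallyConvexSpace ℝ (Matrix (m × n) (m × n) ℂ) :=
    inferInstanceAs (LocallyConvexSpace ℝ (m × n → m × n → ℂ))
  rw [← dual_flip_dual_eq_of_isClosed (reTracePairing (m × n))
    (isClosed_pureProductCone m n)]
  intro X hX
  rw [LinearMap.flip_apply, reTracePairing_apply, ← re_trace_mul_realPart hS]
  exact h _ (ℜ X).2 (realPart_mem_dual_pureProductCone hX)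

end PureProducts

section Duality

variable {dA dB : ℕ}

theorem sepPos_pureProduct (ψ : Fin dA → ℂ) (φ : Fin dB → ℂ) : SepPos (pureProduct ψ φ) :=
  ⟨1, fun _ => _, fun _ => _, fun _ => posSemidef_vecMulVec_self_star ψ,
    fun _ => posSemidef_vecMulVec_self_star φ, by rw [Fin.sum_univ_one, pureProduct]⟩

theorem sepPos_zero : SepPos (0 : Matrix (Fin dA × Fin dB) (Fin dA × Fin dB) ℂ) :=
  ⟨0, Fin.elim0, Fin.elim0, fun i => i.elim0, fun i => i.elim0, by rw [Fin.sum_univ_zero]⟩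

theorem SepPos.add {S T : Matrix (Fin dA × Fin dB) (Fin dA × Fin dB) ℂ}
    (hS : SepPos S) (hT : SepPos T) : SepPos (S + T) := by
  obtain ⟨k, A, B, hA, hB, rfl⟩ := hS
  obtain ⟨l, A', B', hA', hB', rfl⟩ := hT
  refine ⟨k + l, Fin.addCases A A', Fin.addCases B B', ?_, ?_, ?_⟩
  · exact Fin.addCases (by simpa using hA) (by simpa using hA')
  · exact Fin.addCases (by simpa using hB) (by simpa using hB')
  · simp [Fin.sum_univ_add]

theorem SepPos.smul {S : Matrix (Fin dA × Fin dB) (Fin dA × Fin dB) ℂ} (hS : SepPos S) {r : ℝ}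
    (hr : 0 ≤ r) : SepPos (r • S) := by
  obtain ⟨k, A, B, hA, hB, rfl⟩ := hS
  exact ⟨k, fun i => r • A i, B, fun i => (hA i).smul hr, hB, by
    simp only [Finset.smul_sum, smul_kronecker]⟩

theorem sepPos_iff_mem_pureProductCone {S : Matrix (Fin dA × Fin dB) (Fin dA × Fin dB) ℂ} :
    SepPos S ↔ S ∈ pureProductCone (Fin dA) (Fin dB) := by
  constructor
  · rintro ⟨n, A, B, hA, hB, rfl⟩
    exact sum_mem fun i _ => kronecker_mem_pureProductCone (hA i) (hB i)
  · intro hS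
    induction hS using Submodule.span_induction with
    | mem S hS =>
      obtain ⟨ψ, -, φ, -, rfl⟩ := hS
      exact sepPos_pureProduct ψ φ
    | zero => exact sepPos_zero
    | add S T _ _ hS hT => exact hS.add hT
    | smul c S _ hS => exact hS.smul c.2

theorem popt_iff_mem_dual_pureProductCone
    {X : Matrix (Fin dA × Fin dB) (Fin dA × Fin dB) ℂ} (hX : X.IsHermitian) :
    POPT X ↔
      X ∈ dual (reTracePairing (Fin dA × Fin dB)) (pureProductCone (Fin dA) (Fin dB)) := by
  rw [mem_dual_pureProductCone_iff]
  refine forall₂_congr fun ψ φ => ?_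
  rw [trace_mul_pureProduct, Complex.le_def]
  exact and_iff_left (hX.im_star_dotProduct_mulVec_self _).symm

end Duality

/-- under the Hilbert–Schmidt pairing, the separable positive operators
and the POPT operators are dual cones of each other (restricted to self-adjoint
operators). -/
theorem sepPos_popt_duality (dA dB : ℕ) (hdA : 1 ≤ dA) (hdB : 1 ≤ dB) :
    (∀ S : Matrix (Fin dA × Fin dB) (Fin dA × Fin dB) ℂ, S.IsHermitian →
      (SepPos S ↔ ∀ X : Matrix (Fin dA × Fin dB) (Fin dA × Fin dB) ℂ,
        X.IsHermitian → POPT X → 0 ≤ ((S * X).trace).re)) ∧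
    (∀ X : Matrix (Fin dA × Fin dB) (Fin dA × Fin dB) ℂ, X.IsHermitian →
      (POPT X ↔ ∀ S : Matrix (Fin dA × Fin dB) (Fin dA × Fin dB) ℂ,
        SepPos S → 0 ≤ ((X * S).trace).re)) := by
  refine ⟨fun S hS => ?_, fun X hX => ?_⟩
  · rw [sepPos_iff_mem_pureProductCone, mem_pureProductCone_iff_of_isHermitian hS]
    exact forall₂_congr fun X hX => by rw [popt_iff_mem_dual_pureProductCone hX]
  · rw [popt_iff_mem_dual_pureProductCone hX, mem_dual]
    simp only [SetLike.mem_coe, sepPos_iff_mem_pureProductCone, reTracePairing_apply,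
      trace_mul_comm X]
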